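/- Suppose Δλ = j/2 for some integer j (i.e., Δλ is a half-integer), and let N, M, S be positive integers with S | N. Then for every integer k with |k| ≤ M−1 and every integer τ, the argument η_k = Sτ/N + 2kΔλ satisfies D_{M−|k|}(η_k) = D_{M−|k|}(Sτ/N); moreover, for every k with M−|k| ≥ 2, D_{M−|k|}(Sτ/N) attains its maximal value (M−|k|)² if and only if τ is an integer multiple of N/S. Consequently, under half-integer Δλ, the delay profile of each diagonal factor D_{M−|k|}(η_k) appearing in the fourth-moment term T₃ of the expected squared ambiguity function is maximized exactly at the delays τ = m·N/S, m ∈ ℤ. -/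

import Mathlib

/-!
The kernel `dirD L` is `1`-periodic, because shifting the argument of a sine by an integer multiple
of `π` only changes its sign (`dirD_add_int`). For `Δλ = j/2` the shift `2kΔλ = kj` is an integer,
so it does not affect the kernel.

The value `L²` is taken at all integers. For `L ≥ 2` it is taken nowhere else, since
`|sin (L y)| < L |sin y|` whenever `sin y ≠ 0` (`abs_sin_nat_mul_lt`, by induction on the addition
formula). Finally, `Sτ/N` is an integer `m` exactly when `τ = m N / S`.
-/

open MeasureTheory ProbabilityTheory Finset Matrix

open Classical in
/-- Dirichlet-type kernel `S_L(x) = sin(πLx)/sin(πx)` for non-integer `x`,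
extended by `S_L(k) = (−1)^{k(L−1)}·L` at integers `k`. -/
noncomputable def dirS (L : ℕ) (x : ℝ) : ℝ :=
  if h : ∃ k : ℤ, x = (k : ℝ) then
    (-1 : ℝ) ^ (h.choose * ((L : ℤ) - 1)) * L
  else Real.sin (Real.pi * L * x) / Real.sin (Real.pi * x)

/-- `D_L(x) = |S_L(x)|²`. -/
noncomputable def dirD (L : ℕ) (x : ℝ) : ℝ := (dirS L x) ^ 2

/-- DAFT-s-AFDM chirp basis function
`g_m[n] = (1/√(NM))·e^{i2π(c₁n²−λ₁m²)}·Σ_{l<M} e^{i2π(Δλ·l² + (Sn/N − m/M)l)}`. -/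
noncomputable def chirpBasis (N M S : ℕ) (c₁ lam₁ dl : ℝ) (m : ℕ) (n : ℤ) : ℂ :=
  ((1 / Real.sqrt (N * M) : ℝ) : ℂ) *
    Complex.exp (Complex.I * (2 * Real.pi) *
      ((c₁ : ℂ) * (n : ℂ) ^ 2 - (lam₁ : ℂ) * (m : ℂ) ^ 2)) *
    ∑ l ∈ Finset.range M, Complex.exp (Complex.I * (2 * Real.pi) *
      ((dl : ℂ) * (l : ℂ) ^ 2 + ((S : ℂ) * (n : ℂ) / (N : ℂ) - (m : ℂ) / (M : ℂ)) * (l : ℂ)))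

/-- Periodic cross-ambiguity function
`A^P_{m,p}(τ,ν) = Σ_{n<N} g_m[n]·conj(g_p[(n−τ) mod N])·e^{−i2πνn/N}`. -/
noncomputable def crossAFP (N M S : ℕ) (c₁ lam₁ dl : ℝ) (τ : ℤ) (ν : ℝ) (m p : ℕ) : ℂ :=
  ∑ n ∈ Finset.range N,
    chirpBasis N M S c₁ lam₁ dl m (n : ℤ) *
      (starRingEnd ℂ) (chirpBasis N M S c₁ lam₁ dl p (((n : ℤ) - τ) % (N : ℤ))) *
      Complex.exp (-Complex.I * (2 * Real.pi) * (ν : ℂ) * (n : ℂ) / (N : ℂ))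

/-- Aperiodic cross-ambiguity function: for `0 ≤ τ < N` the sum runs over
`n = τ,…,N−1`, and for `−N < τ < 0` over `n = 0,…,N−1−|τ|`. -/
noncomputable def crossAFA (N M S : ℕ) (c₁ lam₁ dl : ℝ) (τ : ℤ) (ν : ℝ) (m p : ℕ) : ℂ :=
  ∑ n ∈ Finset.Icc (max 0 τ) ((N : ℤ) - 1 + min 0 τ),
    chirpBasis N M S c₁ lam₁ dl m n *
      (starRingEnd ℂ) (chirpBasis N M S c₁ lam₁ dl p (n - τ)) *
      Complex.exp (-Complex.I * (2 * Real.pi) * (ν : ℂ) * (n : ℂ) / (N : ℂ))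

/-- Transmitted DAFT-s-AFDM samples `s[n] = Σ_m x_m g_m[n]`. -/
noncomputable def txSig (N M S : ℕ) (c₁ lam₁ dl : ℝ) (x : Fin M → ℂ) (n : ℤ) : ℂ :=
  ∑ m : Fin M, x m * chirpBasis N M S c₁ lam₁ dl (m : ℕ) n

/-- Discrete periodic ambiguity function of the transmitted signal. -/
noncomputable def chiP (N M S : ℕ) (c₁ lam₁ dl : ℝ) (x : Fin M → ℂ) (τ : ℤ) (ν : ℝ) : ℂ :=
  ∑ n ∈ Finset.range N,
    txSig N M S c₁ lam₁ dl x (n : ℤ) *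
      (starRingEnd ℂ) (txSig N M S c₁ lam₁ dl x (((n : ℤ) - τ) % (N : ℤ))) *
      Complex.exp (-Complex.I * (2 * Real.pi) * (ν : ℂ) * (n : ℂ) / (N : ℂ))

/-- Discrete aperiodic ambiguity function of the transmitted signal. -/
noncomputable def chiA (N M S : ℕ) (c₁ lam₁ dl : ℝ) (x : Fin M → ℂ) (τ : ℤ) (ν : ℝ) : ℂ :=
  ∑ n ∈ Finset.Icc (max 0 τ) ((N : ℤ) - 1 + min 0 τ),
    txSig N M S c₁ lam₁ dl x n *
      (starRingEnd ℂ) (txSig N M S c₁ lam₁ dl x (n - τ)) *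
      Complex.exp (-Complex.I * (2 * Real.pi) * (ν : ℂ) * (n : ℂ) / (N : ℂ))

theorem neg_one_zpow_sq (n : ℤ) : ((-1 : ℝ) ^ n) ^ 2 = 1 := by
  rw [← sq_abs, abs_zpow]
  simp

/-- At integers the sign in `dirS` squares away, whichever witness `choose` picks. -/
theorem dirD_int (L : ℕ) (x : ℝ) (h : ∃ k : ℤ, x = (k : ℝ)) : dirD L x = (L : ℝ) ^ 2 := by
  unfold dirD dirS
  rw [dif_pos h, mul_pow]
  rw [neg_one_zpow_sq, one_mul]

theorem dirD_not_int (L : ℕ) (x : ℝ) (h : ¬ ∃ k : ℤ, x = (k : ℝ)) :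
    dirD L x = Real.sin (Real.pi * L * x) ^ 2 / Real.sin (Real.pi * x) ^ 2 := by
  unfold dirD dirS
  rw [dif_neg h, div_pow]

theorem sin_sq_add_int_mul_pi (x : ℝ) (n : ℤ) :
    Real.sin (x + n * Real.pi) ^ 2 = Real.sin x ^ 2 := by
  rw [Real.sin_add_int_mul_pi, mul_pow]
  rw [neg_one_zpow_sq, one_mul]

theorem dirD_add_int (L : ℕ) (x : ℝ) (n : ℤ) : dirD L (x + n) = dirD L x := by
  by_cases h : ∃ k : ℤ, x = (k : ℝ)
  · rw [dirD_int L x h, dirD_int]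
    obtain ⟨k, rfl⟩ := h
    exact ⟨k + n, by push_cast; ring⟩
  · have h' : ¬ ∃ k : ℤ, x + n = (k : ℝ) := by
      rintro ⟨k, hk⟩
      exact h ⟨k - n, by push_cast; linarith⟩
    rw [dirD_not_int L x h, dirD_not_int L _ h']
    have e1 : Real.pi * L * (x + n) = Real.pi * L * x + ((L * n : ℤ) : ℝ) * Real.pi := by
      push_cast; ring
    have e2 : Real.pi * (x + n) = Real.pi * x + (n : ℝ) * Real.pi := by ring
    rw [e1, e2, sin_sq_add_int_mul_pi, sin_sq_add_int_mul_pi]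

/-- The addition formula and `|cos (n x)| ≤ 1` give the inductive step for bounding `sin (n x)`. -/
theorem abs_sin_succ_mul_le (n : ℕ) (x : ℝ) :
    |Real.sin ((n + 1 : ℕ) * x)| ≤ |Real.sin (n * x)| * |Real.cos x| + |Real.sin x| := by
  have e : ((n + 1 : ℕ) : ℝ) * x = n * x + x := by push_cast; ring
  rw [e, Real.sin_add]
  refine (abs_add_le _ _).trans ?_
  rw [abs_mul, abs_mul]
  have := mul_le_mul_of_nonneg_right (Real.abs_cos_le_one (n * x)) (abs_nonneg (Real.sin x))
  linarith

theorem abs_sin_nat_mul_le' (n : ℕ) (x : ℝ) : |Real.sin (n * x)| ≤ n * |Real.sin x| := by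
  induction n with
  | zero => simp
  | succ n ih =>
    have h1 := abs_sin_succ_mul_le n x
    have h2 := mul_le_mul_of_nonneg_left (Real.abs_cos_le_one x) (abs_nonneg (Real.sin (n * x)))
    push_cast at h1 ⊢
    linarith

/-- Strictness comes from `|cos x| < 1`, which holds as soon as `sin x ≠ 0`. -/
theorem abs_sin_nat_mul_lt (L : ℕ) (hL : 2 ≤ L) (x : ℝ) (hx : Real.sin x ≠ 0) :
    |Real.sin (L * x)| < L * |Real.sin x| := by
  obtain ⟨n, rfl⟩ : ∃ n, L = n + 1 := ⟨L - 1, by omega⟩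
  have hs : 0 < |Real.sin x| := abs_pos.mpr hx
  have hc : |Real.cos x| < 1 := by
    rw [← sq_lt_one_iff_abs_lt_one]
    have := Real.sin_sq_add_cos_sq x
    have : 0 < Real.sin x ^ 2 := by positivity
    linarith
  have hn : (0 : ℝ) < n := by
    have : 0 < n := by omega
    exact_mod_cast this
  have h1 := abs_sin_succ_mul_le n x
  have h2 := mul_le_mul_of_nonneg_right (abs_sin_nat_mul_le' n x) (abs_nonneg (Real.cos x))
  have h3 := mul_lt_mul_of_pos_left hc (mul_pos hn hs)
  push_cast at h1 ⊢
  linarith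

theorem dirD_eq_sq_iff (L : ℕ) (hL : 2 ≤ L) (x : ℝ) :
    dirD L x = (L : ℝ) ^ 2 ↔ ∃ k : ℤ, x = (k : ℝ) := by
  refine ⟨fun h => ?_, dirD_int L x⟩
  by_contra hx
  have hs : Real.sin (Real.pi * x) ≠ 0 := by
    rw [Ne, Real.sin_eq_zero_iff]
    rintro ⟨k, hk⟩
    refine hx ⟨k, ?_⟩
    have := Real.pi_ne_zero
    apply mul_left_cancel₀ this
    linarith
  rw [dirD_not_int L x hx, div_eq_iff (by positivity), ← mul_pow, sq_eq_sq_iff_abs_eq_abs,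
    abs_mul, Nat.abs_cast] at h
  have := abs_sin_nat_mul_lt L hL _ hs
  rw [show (L : ℝ) * (Real.pi * x) = Real.pi * L * x by ring] at this
  linarith

/-- Proposition 1. If `Δλ = j/2` is a half-integer and `S ∣ N`,
then for every integer `k` with `|k| ≤ M−1` and every integer delay `τ`, the
argument `η_k = Sτ/N + 2kΔλ` satisfies
`D_{M−|k|}(η_k) = D_{M−|k|}(Sτ/N)`; moreover, whenever `M−|k| ≥ 2`,
`D_{M−|k|}(Sτ/N)` attains its maximal value `(M−|k|)²` iff `τ` is an integer
multiple of `N/S`. Hence, under half-integer `Δλ`, the diagonal factors of `T₃`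
are maximized exactly at the delays `τ = m·N/S`, `m ∈ ℤ`. -/
theorem stmt_12 (N M S : ℕ) (hN : 0 < N) (hM : 0 < M) (hS : 0 < S)
    (hSN : S ∣ N) (dl : ℝ) (j : ℤ) (hdl : dl = (j : ℝ) / 2) :
    (∀ k : ℤ, k.natAbs ≤ M - 1 → ∀ τ : ℤ,
        dirD (M - k.natAbs) ((S : ℝ) * (τ : ℝ) / N + 2 * (k : ℝ) * dl)
          = dirD (M - k.natAbs) ((S : ℝ) * (τ : ℝ) / N))
    ∧ (∀ k : ℤ, k.natAbs ≤ M - 1 → 2 ≤ M - k.natAbs → ∀ τ : ℤ,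
        (dirD (M - k.natAbs) ((S : ℝ) * (τ : ℝ) / N)
            = ((M : ℝ) - (k.natAbs : ℝ)) ^ 2
          ↔ ∃ m : ℤ, (τ : ℝ) = (m : ℝ) * N / S)) := by
  have hN' : (N : ℝ) ≠ 0 := by positivity
  have hS' : (S : ℝ) ≠ 0 := by positivity
  refine ⟨fun k _ τ => ?_, fun k hk hk2 τ => ?_⟩
  · have e : 2 * (k : ℝ) * dl = ((k * j : ℤ) : ℝ) := by
      rw [hdl]; push_cast; ring
    rw [e, dirD_add_int]
  · have e : (M : ℝ) - (k.natAbs : ℝ) = ((M - k.natAbs : ℕ) : ℝ) := by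
      rw [Nat.cast_sub (by omega)]
    rw [e, dirD_eq_sq_iff _ hk2]
    refine exists_congr fun m => ?_
    rw [div_eq_iff hN', eq_div_iff hS', mul_comm (S : ℝ)]
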